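/- Let n ≥ 1 and let T be a proper subset of [n]. Let m be the largest integer in [n] not belonging to T, and set E = {1,2,…,m-1} \ T. Then ∑_{π ∈ S_n, T ⊆ FIX(π)} (-1)^{inv(π)} ∏_{j ∈ EXCi(π)} x_j = ∏_{j ∈ E} (1 - x_j), where the empty product has value 1. In particular, setting all variables equal to t, the difference between the excedance generating polynomials of even and odd permutations of [n] fixing every element of T equals (1-t)^{n-1-|T|}. -/

import Mathlib

open Finset MvPolynomial

/-- Number of inversions of a permutation of `Fin n`
(pairs `p.1 < p.2` with `π p.1 > π p.2`). -/
def inversions {n : ℕ} (π : Equiv.Perm (Fin n)) : ℕ :=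
  (Finset.univ.filter fun p : Fin n × Fin n => p.1 < p.2 ∧ π p.2 < π p.1).card

/-- Excedance indices of a permutation. -/
def EXCi {n : ℕ} (π : Equiv.Perm (Fin n)) : Finset (Fin n) :=
  Finset.univ.filter fun i => i < π i

/-- Excedance values of a permutation. -/
def EXCv {n : ℕ} (π : Equiv.Perm (Fin n)) : Finset (Fin n) :=
  (EXCi π).image π

/-- Right-to-left minima indices of a permutation. -/
def RLMi {n : ℕ} (π : Equiv.Perm (Fin n)) : Finset (Fin n) :=
  Finset.univ.filter fun i => ∀ j, i < j → π i < π j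

/-- Right-to-left minima values of a permutation. -/
def RLMv {n : ℕ} (π : Equiv.Perm (Fin n)) : Finset (Fin n) :=
  (RLMi π).image π

/-- The derangements of `Fin n`, i.e. permutations with no fixed point. -/
def derangementsF (n : ℕ) : Finset (Equiv.Perm (Fin n)) :=
  Finset.univ.filter fun π => ∀ i, π i ≠ i

/-!
The signed sum of `∏ j ∈ EXCi π, x j` over all permutations of a finite linear order is the Leibniz
expansion of the determinant of the matrix with entries `x i` above the diagonal and `1` elsewhere.
Its last row is all ones, so subtracting `x i` times the last row from each other row `i` clears
everything above the diagonal and leaves `1 - x i` on it. Since a fixed point is not an excedance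
and does not affect the sign, the permutations fixing `T` pointwise contribute the same sum as all
permutations of the complement of `T`, whose largest element is `m`.
-/

section Excedances

variable {ι R : Type*} [LinearOrder ι] [CommRing R]

/-- The matrix with entries `x i` above the diagonal and `1` elsewhere, whose determinant is the
signed generating function of excedances. -/
def excedanceMatrix (x : ι → R) : Matrix ι ι R :=
  .of fun i j => if i < j then x i else 1

lemma excedanceMatrix_apply (x : ι → R) (i j : ι) :
    excedanceMatrix x i j = if i < j then x i else 1 :=
  rfl

variable [Fintype ι]

/-- The excedance indices of a permutation of an arbitrary finite linear order. On `Fin n` this is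
`EXCi`; the general notion is needed in order to pass to the complement of a set of fixed points. -/
def excedances (π : Equiv.Perm ι) : Finset ι := {i | i < π i}

lemma excedances_ofSubtype (p : ι → Prop) [DecidablePred p] (σ : Equiv.Perm (Subtype p)) :
    excedances (Equiv.Perm.ofSubtype σ) =
      (excedances σ).map (Function.Embedding.subtype p) := by
  ext i
  by_cases hi : p i
  · simp [excedances, hi, Equiv.Perm.ofSubtype_apply_of_mem, ← Subtype.coe_lt_coe]
  · simp [excedances, hi, Equiv.Perm.ofSubtype_apply_of_not_mem]

lemma det_excedanceMatrix_eq_sum (x : ι → R) :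
    (excedanceMatrix x).det =
      ∑ π : Equiv.Perm ι, ((Equiv.Perm.sign π : ℤ) : R) * ∏ i ∈ excedances π, x i := by
  rw [← Matrix.det_transpose, Matrix.det_apply']
  simp only [Matrix.transpose_apply, excedanceMatrix_apply, excedances, Finset.prod_filter]

lemma det_excedanceMatrix_of_isTop (x : ι → R) {m : ι} (hm : IsTop m) :
    (excedanceMatrix x).det = ∏ i with i < m, (1 - x i) := by
  let reduced : Matrix ι ι R :=
    .of fun i j => excedanceMatrix x i j + (if i = m then 0 else -x i) * excedanceMatrix x m j
  have last_row (j : ι) : excedanceMatrix x m j = 1 := if_neg (hm j).not_gt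
  have reduced_apply (i j : ι) :
      reduced i j = (if i < j then x i else 1) + if i = m then 0 else -x i := by
    simp [reduced, last_row, excedanceMatrix_apply]
  have det_reduced : reduced.det = (excedanceMatrix x).det :=
    Matrix.det_eq_of_forall_row_eq_smul_add_const _ m (if_pos rfl) fun _ _ => rfl
  have lower : reduced.IsLowerTriangular := fun i j (hij : i < j) => by
    have him : i ≠ m := (hij.trans_le (hm j)).ne
    simp [reduced_apply, hij, him]
  have diag (i : ι) : reduced i i = if i < m then 1 - x i else 1 := by
    rcases (hm i).lt_or_eq with him | rfl
    · simp [reduced_apply, him, him.ne, sub_eq_add_neg]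
    · simp [reduced_apply]
  rw [← det_reduced, Matrix.det_of_isLowerTriangular _ lower, Finset.prod_filter]
  exact Finset.prod_congr rfl fun i _ => diag i

lemma sum_sign_mul_prod_excedances_of_isTop (x : ι → R) {m : ι} (hm : IsTop m) :
    ∑ π : Equiv.Perm ι, ((Equiv.Perm.sign π : ℤ) : R) * ∏ i ∈ excedances π, x i =
      ∏ i with i < m, (1 - x i) :=
  (det_excedanceMatrix_eq_sum x).symm.trans (det_excedanceMatrix_of_isTop x hm)

lemma sum_sign_mul_prod_excedances_fixing_eq_sum_compl (T : Finset ι) (x : ι → R) :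
    ∑ π : Equiv.Perm ι with ∀ i ∈ T, π i = i,
        ((Equiv.Perm.sign π : ℤ) : R) * ∏ i ∈ excedances π, x i =
      ∑ σ : Equiv.Perm {i // i ∉ T},
        ((Equiv.Perm.sign σ : ℤ) : R) * ∏ i ∈ excedances σ, x i := by
  rw [Finset.sum_subtype (p := fun π : Equiv.Perm ι => ∀ i, ¬ i ∉ T → π i = i) _ (by simp),
    ← (Equiv.Perm.subtypeEquivSubtypePerm (· ∉ T)).sum_comp]
  refine Finset.sum_congr rfl fun σ _ => ?_
  simp [Equiv.Perm.subtypeEquivSubtypePerm, excedances_ofSubtype, Equiv.Perm.sign_ofSubtype]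

lemma sum_sign_mul_prod_excedances_fixing_eq_prod (T : Finset ι) (x : ι → R) {m : ι}
    (hm : m ∉ T) (hmax : ∀ i ∉ T, i ≤ m) :
    ∑ π : Equiv.Perm ι with ∀ i ∈ T, π i = i,
        ((Equiv.Perm.sign π : ℤ) : R) * ∏ i ∈ excedances π, x i =
      ∏ j ∈ ({j | j < m} : Finset ι) \ T, (1 - x j) := by
  have isTop_m : IsTop (⟨m, hm⟩ : {i // i ∉ T}) := fun i => hmax i i.2
  have sum_compl := sum_sign_mul_prod_excedances_of_isTop (fun i : {i // i ∉ T} => x i) isTop_m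
  -- Not `rw`: the `DecidableEq` instances on the subtype agree only after unfolding.
  refine (sum_sign_mul_prod_excedances_fixing_eq_sum_compl T x).trans (sum_compl.trans ?_)
  rw [← Finset.filter_notMem_eq_sdiff,
    ← Finset.prod_subtype_eq_prod_filter (fun j => 1 - x j)]
  refine Finset.prod_congr ?_ fun _ _ => rfl
  ext i
  simp [← Subtype.coe_lt_coe]

end Excedances

lemma sign_eq_neg_one_pow_inversions {n : ℕ} (π : Equiv.Perm (Fin n)) :
    Equiv.Perm.sign π = (-1) ^ inversions π := by
  rw [Equiv.Perm.sign_eq_prod_prod_Ioi, inversions, ← Finset.prod_const, Finset.prod_filter,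
    Fintype.prod_prod_type]
  refine Finset.prod_congr rfl fun i _ => ?_
  rw [← Finset.filter_lt_eq_Ioi, Finset.prod_filter]
  refine Finset.prod_congr rfl fun j _ => ?_
  have apply_lt_or_gt (hij : i < j) : π i < π j ∨ π j < π i :=
    (π.injective.ne hij.ne).lt_or_gt
  grind

lemma sum_neg_one_pow_inversions_mul_prod_EXCi {R : Type*} [CommRing R] {n : ℕ}
    (T : Finset (Fin n)) (x : Fin n → R) {m : Fin n} (hm : m ∉ T) (hmax : ∀ i ∉ T, i ≤ m) :
    ∑ π : Equiv.Perm (Fin n) with ∀ i ∈ T, π i = i,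
        (-1) ^ inversions π * ∏ j ∈ EXCi π, x j =
      ∏ j ∈ ({j | j < m} : Finset (Fin n)) \ T, (1 - x j) := by
  rw [← sum_sign_mul_prod_excedances_fixing_eq_prod T x hm hmax]
  refine Finset.sum_congr (by ext; simp) fun π _ => ?_
  simp [sign_eq_neg_one_pow_inversions, EXCi, excedances]

lemma sum_filter_even_sub_sum_filter_not_even {α R : Type*} [CommRing R] (s : Finset α)
    (k : α → ℕ) (f : α → R) :
    ∑ a ∈ s with Even (k a), f a - ∑ a ∈ s with ¬ Even (k a), f a =
      ∑ a ∈ s, (-1) ^ k a * f a := by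
  rw [Finset.sum_filter, Finset.sum_filter, ← Finset.sum_sub_distrib]
  refine Finset.sum_congr rfl fun a _ => ?_
  by_cases ha : Even (k a)
  · simp [ha, ha.neg_one_pow]
  · simp [ha, (Nat.not_even_iff_odd.mp ha).neg_one_pow]

lemma card_filter_lt_sdiff {ι : Type*} [Fintype ι] [LinearOrder ι] (T : Finset ι) {m : ι}
    (hm : m ∉ T) (hmax : ∀ i ∉ T, i ≤ m) :
    (({j | j < m} : Finset ι) \ T).card = Fintype.card ι - 1 - T.card := by
  have eq_erase : ({j | j < m} : Finset ι) \ T = Tᶜ.erase m := by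
    ext j
    simp only [mem_sdiff, mem_filter_univ, mem_erase, mem_compl]
    exact and_congr_left fun hj => (hmax j hj).lt_iff_ne
  rw [eq_erase, Finset.card_erase_of_mem (by simpa using hm), Finset.card_compl, Nat.sub_right_comm]

/-- Here `Fin n` represents `[n]` via `i ↦ i + 1`; `m` is the largest element
of `[n]` not in `T`, and `E = {1,…,m-1} \ T` corresponds to
`(univ.filter (· < m)) \ T`. -/
theorem stmt9 (n : ℕ) (hn : 1 ≤ n) (T : Finset (Fin n)) (hT : T ≠ Finset.univ)
    (m : Fin n) (hm : m ∉ T) (hmax : ∀ i : Fin n, i ∉ T → i ≤ m) :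
    ((∑ π ∈ Finset.univ.filter (fun π : Equiv.Perm (Fin n) => ∀ i ∈ T, π i = i),
        ((-1 : MvPolynomial (Fin n) ℤ) ^ inversions π) * ∏ j ∈ EXCi π, X j)
      = ∏ j ∈ (Finset.univ.filter (fun j : Fin n => j < m)) \ T,
          (1 - (X j : MvPolynomial (Fin n) ℤ)))
    ∧
    ((∑ π ∈ Finset.univ.filter
          (fun π : Equiv.Perm (Fin n) => (∀ i ∈ T, π i = i) ∧ Even (inversions π)),
        (Polynomial.X : Polynomial ℤ) ^ (EXCi π).card)
      - (∑ π ∈ Finset.univ.filter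
          (fun π : Equiv.Perm (Fin n) => (∀ i ∈ T, π i = i) ∧ ¬ Even (inversions π)),
          (Polynomial.X : Polynomial ℤ) ^ (EXCi π).card)
      = (1 - Polynomial.X) ^ (n - 1 - T.card)) := by
  refine ⟨sum_neg_one_pow_inversions_mul_prod_EXCi T X hm hmax, ?_⟩
  have signed_sum := sum_neg_one_pow_inversions_mul_prod_EXCi T
    (fun _ => (Polynomial.X : Polynomial ℤ)) hm hmax
  simp only [Finset.prod_const, card_filter_lt_sdiff T hm hmax, Fintype.card_fin] at signed_sum
  rw [← Finset.filter_filter, ← Finset.filter_filter, sum_filter_even_sub_sum_filter_not_even,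
    signed_sum]
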